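/- For every θ ∈ (0,1) and every positive integer N there exists a temperature τ̃ > 0 such that the mean squared error of the N-sample Smoothed-Autodiff estimator with temperature τ̃ is strictly less than 4, i.e., (∫₀¹ ∂_θ h_{τ̃}(u,θ) du + 2)² + (1/N)·Var_{U~Uniform[0,1]}(∂_θ h_{τ̃}(U,θ)) < 4. -/

import Mathlib

open Real Filter MeasureTheory

/-- The smoothed reparameterization `h_τ(u, θ)`. -/
noncomputable def hSm (τ u θ : ℝ) : ℝ :=
  (Real.exp ((u - θ) / τ) - 1) / (Real.exp ((u - θ) / τ) + 1)

/-- The θ-partial derivative `∂_θ h_τ(u, θ)`. -/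
noncomputable def dhSm (τ u θ : ℝ) : ℝ :=
  -(2 / τ) * Real.exp ((u - θ) / τ) / (Real.exp ((u - θ) / τ) + 1) ^ 2

/-- Mean of `∂_θ h_τ(U, θ)` for `U ~ Uniform[0,1]`. -/
noncomputable def meanDh (τ θ : ℝ) : ℝ := ∫ u in (0:ℝ)..1, dhSm τ u θ

/-- Variance of `∂_θ h_τ(U, θ)` for `U ~ Uniform[0,1]`. -/
noncomputable def varDh (τ θ : ℝ) : ℝ :=
  (∫ u in (0:ℝ)..1, (dhSm τ u θ) ^ 2) - (meanDh τ θ) ^ 2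

/-!
The mean squared error only decreases with the number of samples, and for a single sample
it is `𝔼[(X - c)²]` with `X = ∂_θ h_τ(U, θ)` and `c = -2`. It therefore lies below `c²`, the error
of the estimator that always returns `0`, as soon as `X` falls strictly between `2c = -4` and `0`.
Since `-1 / (2τ) ≤ ∂_θ h_τ < 0`, every temperature `τ > 1/8` achieves this.
-/

open ProbabilityTheory

section MeanSquaredError

variable {Ω : Type*} [MeasurableSpace Ω] {μ : Measure Ω} [IsProbabilityMeasure μ] {X : Ω → ℝ}

theorem sq_integral_sub_add_variance (hX : MemLp X 2 μ) (c : ℝ) :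
    (μ[X] - c) ^ 2 + Var[X; μ] = ∫ ω, (X ω - c) ^ 2 ∂μ := by
  have mean_sub : ∫ ω, (X ω - c) ∂μ = μ[X] - c := by
    rw [integral_sub (hX.integrable one_le_two) (integrable_const c)]
    simp
  have variance_sub : Var[X; μ] = (∫ ω, (X ω - c) ^ 2 ∂μ) - (μ[X] - c) ^ 2 := by
    rw [← variance_sub_const hX.aestronglyMeasurable c, ← mean_sub]
    exact variance_eq_sub (hX.sub (memLp_const c))
  rw [variance_sub]
  ring

theorem integral_lt_of_ae_lt {c : ℝ} (hX : Integrable X μ) (h : ∀ᵐ ω ∂μ, X ω < c) :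
    μ[X] < c := by
  obtain ⟨ω, hω, hle⟩ := exists_notMem_null_integral_le hX (ae_iff.mp h)
  exact hle.trans_lt (not_not.mp hω)

theorem sq_integral_sub_add_variance_div_lt_sq {c : ℝ} (hX : AEStronglyMeasurable X μ)
    (h : ∀ᵐ ω ∂μ, |X ω - c| < |c|) {N : ℕ} (hN : 0 < N) :
    (μ[X] - c) ^ 2 + Var[X; μ] / N < c ^ 2 := by
  have bound : ∀ᵐ ω ∂μ, ‖X ω‖ ≤ |c| + |c| := h.mono fun ω hω => by
    simpa using (abs_add_le (X ω - c) c).trans (add_le_add_left hω.le |c|)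
  have memLp : MemLp X 2 μ := .of_bound hX _ bound
  calc (μ[X] - c) ^ 2 + Var[X; μ] / N
    _ ≤ (μ[X] - c) ^ 2 + Var[X; μ] := by
      gcongr
      exact div_le_self (variance_nonneg X μ) (mod_cast hN)
    _ = ∫ ω, (X ω - c) ^ 2 ∂μ := sq_integral_sub_add_variance memLp c
    _ < c ^ 2 := integral_lt_of_ae_lt (memLp.sub (memLp_const c)).integrable_sq
      (h.mono fun _ => sq_lt_sq.mpr)

end MeanSquaredError

theorem div_add_one_sq_le_one_fourth (x : ℝ) : x / (x + 1) ^ 2 ≤ 1 / 4 :=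
  div_le_of_le_mul₀ (sq_nonneg _) (by norm_num) (by linarith [four_mul_le_sq_add x 1])

section Derivative

variable {τ : ℝ} (u θ : ℝ)

theorem dhSm_neg (hτ : 0 < τ) : dhSm τ u θ < 0 := by
  rw [dhSm, neg_mul, neg_div, neg_lt_zero]
  positivity

theorem neg_one_div_two_mul_le_dhSm (hτ : 0 < τ) : -(1 / (2 * τ)) ≤ dhSm τ u θ :=
  calc -(1 / (2 * τ))
    _ = -(2 / τ) * (1 / 4) := by field_simp; norm_num
    _ ≤ -(2 / τ) * (exp ((u - θ) / τ) / (exp ((u - θ) / τ) + 1) ^ 2) :=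
      mul_le_mul_of_nonpos_left (div_add_one_sq_le_one_fourth _) (neg_nonpos.mpr (by positivity))
    _ = dhSm τ u θ := (mul_div_assoc _ _ _).symm

theorem abs_dhSm_add_two_lt_two (hτ : 1 / 8 < τ) : |dhSm τ u θ + 2| < 2 := by
  have hτ₀ : 0 < τ := by linarith
  have lower := neg_one_div_two_mul_le_dhSm u θ hτ₀
  have upper := dhSm_neg u θ hτ₀
  have hτ₄ : 1 / (2 * τ) < 4 := by
    rw [div_lt_iff₀ (by positivity)]
    linarith
  exact abs_lt.mpr ⟨by linarith, by linarith⟩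

end Derivative

theorem continuous_dhSm (τ θ : ℝ) : Continuous fun u => dhSm τ u θ := by
  unfold dhSm
  exact Continuous.div (by fun_prop) (by fun_prop) fun u => by positivity

/-- The uniform distribution on `[0, 1]`, restricted to the half-open interval `(0, 1]` because
interval integrals are defined over it. -/
noncomputable def uniformUnit : Measure ℝ := volume.restrict (Set.Ioc 0 1)

instance isProbabilityMeasure_uniformUnit : IsProbabilityMeasure uniformUnit :=
  ⟨by simp [uniformUnit]⟩

theorem meanDh_eq_integral (τ θ : ℝ) : meanDh τ θ = uniformUnit[fun u => dhSm τ u θ] :=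
  intervalIntegral.integral_of_le zero_le_one

theorem memLp_dhSm (τ θ : ℝ) : MemLp (fun u => dhSm τ u θ) 2 uniformUnit :=
  (memLp_two_iff_integrable_sq (continuous_dhSm τ θ).aestronglyMeasurable).mpr
    (((continuous_dhSm τ θ).pow 2).integrableOn_Ioc)

theorem varDh_eq_variance (τ θ : ℝ) : varDh τ θ = Var[fun u => dhSm τ u θ; uniformUnit] := by
  rw [variance_eq_sub (memLp_dhSm τ θ), varDh, meanDh_eq_integral,
    intervalIntegral.integral_of_le zero_le_one]
  rfl

theorem smoothed_autodiff_mse_lt_four_general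
    (θ : ℝ) {N : ℕ} (hN : 0 < N) {τ : ℝ} (hτ : 1 / 8 < τ) :
    (meanDh τ θ + 2) ^ 2 + (1 / (N : ℝ)) * varDh τ θ < 4 := by
  have near_gradient : ∀ u, |dhSm τ u θ - (-2)| < |(-2 : ℝ)| := fun u => by
    simpa using abs_dhSm_add_two_lt_two u θ hτ
  have mse_lt := sq_integral_sub_add_variance_div_lt_sq (μ := uniformUnit)
    (continuous_dhSm τ θ).aestronglyMeasurable (.of_forall near_gradient) hN
  rw [← meanDh_eq_integral, ← varDh_eq_variance] at mse_lt
  calc (meanDh τ θ + 2) ^ 2 + (1 / (N : ℝ)) * varDh τ θ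
    _ = (meanDh τ θ - (-2)) ^ 2 + varDh τ θ / N := by ring
    _ < (-2) ^ 2 := mse_lt
    _ = 4 := by norm_num

/-- For every `θ ∈ (0,1)` and every positive `N` there is a temperature `τ̃ > 0` such that the
MSE of the `N`-sample Smoothed-Autodiff estimator with temperature `τ̃` is strictly
less than `4`. -/
theorem smoothed_autodiff_mse_lt_four
    (θ : ℝ) (hθ : θ ∈ Set.Ioo (0:ℝ) 1) (N : ℕ) (hN : 0 < N) :
    ∃ τ : ℝ, 0 < τ ∧
      (meanDh τ θ + 2) ^ 2 + (1 / (N : ℝ)) * varDh τ θ < 4 := by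
  exact ⟨1, one_pos, smoothed_autodiff_mse_lt_four_general θ hN (by norm_num)⟩
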